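/- For every n ≥ 1, the number of quasi-Stirling permutations w of size n with des(w) = n is exactly (n+1)^{n−1}. -/

import Mathlib

open Finset
open scoped Classical

/-- Number of descents of a word `w` of length `N` over a linearly ordered
alphabet.  Positions are 0-indexed: a position `i` is a descent if it is the
last position or the letter at `i` is greater than the letter at `i + 1`. -/
noncomputable def desW {α : Type*} [LinearOrder α] {N : ℕ} (w : Fin N → α) : ℕ :=
  (univ.filter fun i : Fin N =>
    (i : ℕ) + 1 = N ∨ ∃ h : (i : ℕ) + 1 < N, w ⟨(i : ℕ) + 1, h⟩ < w i).card

/-- The set of quasi-Stirling permutations of size `n`, encoded as words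
`w : Fin (2 * n) → Fin n` (the letters `1, …, n` are encoded as the elements
of `Fin n`) in which every letter occurs exactly twice and there are no indices
`i < j < l < p` with `w i = w l`, `w j = w p` and `w i ≠ w j`. -/
noncomputable def quasiStirlingSet (n : ℕ) : Finset (Fin (2 * n) → Fin n) :=
  univ.filter fun w =>
    (∀ a : Fin n, (univ.filter fun i => w i = a).card = 2) ∧
    ∀ i j l p : Fin (2 * n), i < j → j < l → l < p →
      w i = w l → w j = w p → w i = w j

/-!
Writing a label whenever a depth-first traversal enters or leaves its vertex turns plane forests
with distinct labels into quasi-Stirling words, bijectively. Put a letter `p`, smaller than all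
others, at both ends of such a word as a virtual root. Cutting the traversal at every visit of a
vertex expresses the number of descents as a sum over all vertices `a` of the number of descents of
the cyclic word `a c₁ ⋯ cₘ`, where `c₁, …, cₘ` are the children of `a`. Each summand is at most `m`,
and for a given set of children exactly one order attains `m`. Hence the words of size `n` with `n`
descents correspond to the trees on `n + 1` labelled vertices with root `p` and unordered children,
of which there are `(n + 1) ^ (n - 1)`.

To count these, let `F k r` be the number of forests with `k` prescribed roots and `r` further
vertices. Replacing the first root by its children gives
`F (k + 1) r = ∑ j, r.choose j * F (k + j) (r - j)`, which is solved by `k * (k + r) ^ (r - 1)`.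
-/

section Descents

variable {α : Type*} [LinearOrder α]

/-- The number of descents of a word, counted between adjacent letters only; in contrast to
`desW`, the last position is not a descent. -/
def descents : List α → ℕ
  | a :: b :: l => (if b < a then 1 else 0) + descents (b :: l)
  | _ => 0

lemma descents_cons_cons (a b : α) (l : List α) :
    descents (a :: b :: l) = (if b < a then 1 else 0) + descents (b :: l) := rfl

@[simp]
lemma descents_singleton (a : α) : descents [a] = 0 := rfl

lemma descents_append_cons (u v : List α) (a : α) :
    descents (u ++ a :: v) = descents (u ++ [a]) + descents (a :: v) := by
  induction u with
  | nil => simp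
  | cons x u ih =>
    cases u with
    | nil => simp [descents_cons_cons]
    | cons y u => simp only [List.cons_append, descents_cons_cons] at ih ⊢; rw [ih, add_assoc]

lemma descents_cons_le_length (a : α) (l : List α) : descents (a :: l) ≤ l.length := by
  induction l generalizing a with
  | nil => simp
  | cons b l ih => grind [descents_cons_cons]

lemma descents_cons_eq_length_iff (a : α) (l : List α) :
    descents (a :: l) = l.length ↔ (a :: l).SortedGT := by
  rw [List.sortedGT_iff_isChain]
  induction l generalizing a with
  | nil => simp
  | cons b l ih =>
    have hle := descents_cons_le_length b l
    rw [List.isChain_cons_cons, ← ih b, descents_cons_cons, List.length_cons]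
    split_ifs <;> grind

lemma not_sortedGT_cons_append_singleton {x y : α} (hxy : x ≤ y) (l : List α) :
    ¬ (x :: (l ++ [y])).SortedGT := fun h =>
  hxy.not_gt ((List.pairwise_cons.1 h.pairwise).1 y (by simp))

lemma descents_cons_append_singleton_le {x y : α} (hxy : x ≤ y) (l : List α) :
    descents (x :: (l ++ [y])) ≤ l.length := by
  have hle := descents_cons_le_length x (l ++ [y])
  have hne := mt (descents_cons_eq_length_iff x (l ++ [y])).1
    (not_sortedGT_cons_append_singleton hxy l)
  grind

-- The word `l = A ++ B` is split at the only step of `x l y` that is not a descent.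
lemma descents_cons_append_singleton_eq_length_iff {x y : α} (hxy : x ≤ y) (l : List α) :
    descents (x :: (l ++ [y])) = l.length ↔
      ∃ A B, l = A ++ B ∧ (x :: A).SortedGT ∧ (B ++ [y]).SortedGT := by
  induction l generalizing x with
  | nil =>
    simp [descents_cons_cons, hxy.not_gt, List.sortedGT_iff_isChain]
  | cons c l ih =>
    rw [List.cons_append, descents_cons_cons, List.length_cons]
    by_cases hcx : c < x
    · have hcy : c ≤ y := hcx.le.trans hxy
      rw [if_pos hcx, add_comm, add_left_inj, ih hcy]
      constructor
      · rintro ⟨A, B, rfl, hA, hB⟩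
        have hxcA : (x :: c :: A).IsChain (· > ·) := List.isChain_cons_cons.2 ⟨hcx, hA.isChain⟩
        exact ⟨c :: A, B, rfl, hxcA.sortedGT, hB⟩
      · rintro ⟨_ | ⟨_, A⟩, B, hl, hA, hB⟩
        · obtain rfl : c :: l = B := hl
          exact absurd hB (not_sortedGT_cons_append_singleton hcy l)
        · obtain ⟨rfl, rfl⟩ := List.cons.inj hl
          exact ⟨A, B, rfl, (List.isChain_cons_cons.1 hA.isChain).2.sortedGT, hB⟩
    · have hlen : l.length + 1 = (l ++ [y]).length := by simp
      rw [if_neg hcx, zero_add, hlen, descents_cons_eq_length_iff]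
      constructor
      · exact fun h => ⟨[], c :: l, rfl, by simp [List.sortedGT_iff_isChain], h⟩
      · rintro ⟨_ | ⟨_, A⟩, B, hl, hA, hB⟩
        · obtain rfl : c :: l = B := hl
          exact hB
        · obtain ⟨rfl, rfl⟩ := List.cons.inj hl
          exact absurd (List.isChain_cons_cons.1 hA.isChain).1 hcx

/-- The word `p cs`, read cyclically, has the largest possible number of descents; when the
letters of `p cs` are distinct, this says that its cyclic rotation starting at the largest letter
is decreasing. -/
def IsCyclicallyDecreasing (p : α) (cs : List α) : Prop :=
  descents (p :: (cs ++ [p])) = cs.length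

/-- The arrangement of `C` that is cyclically decreasing after the letter `p`. -/
def cyclicSort (p : α) (C : Finset α) : List α :=
  {c ∈ C | c < p}.sort (· ≥ ·) ++ {c ∈ C | p < c}.sort (· ≥ ·)

lemma coe_cyclicSort {p : α} {C : Finset α} (hp : p ∉ C) :
    (cyclicSort p C : Multiset α) = C.val := by
  have hC : {c ∈ C | p < c} = {c ∈ C | ¬ c < p} :=
    filter_congr fun c hc => by grind
  rw [cyclicSort, ← Multiset.coe_add, sort_eq, sort_eq, hC, filter_val, filter_val,
    Multiset.filter_add_not]

lemma length_cyclicSort {p : α} {C : Finset α} (hp : p ∉ C) :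
    (cyclicSort p C).length = #C := by
  rw [← Multiset.coe_card, coe_cyclicSort hp, card_val]

lemma isCyclicallyDecreasing_cyclicSort (p : α) (C : Finset α) :
    IsCyclicallyDecreasing p (cyclicSort p C) := by
  refine (descents_cons_append_singleton_eq_length_iff le_rfl _).2
    ⟨_, _, rfl, List.Pairwise.sortedGT ?_, List.Pairwise.sortedGT ?_⟩
  · exact List.pairwise_cons.2 ⟨by simp, (sortedGT_sort _).pairwise⟩
  · exact List.pairwise_append.2 ⟨(sortedGT_sort _).pairwise, by simp, by simp⟩

lemma IsCyclicallyDecreasing.eq_cyclicSort {p : α} {cs : List α}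
    (h : IsCyclicallyDecreasing p cs) : cs = cyclicSort p cs.toFinset := by
  obtain ⟨A, B, rfl, hA, hB⟩ := (descents_cons_append_singleton_eq_length_iff le_rfl _).1 h
  obtain ⟨hAp, hA⟩ := List.pairwise_cons.1 hA.pairwise
  obtain ⟨hB, -, hBp⟩ := List.pairwise_append.1 hB.pairwise
  replace hBp : ∀ b ∈ B, p < b := fun b hb => hBp b hb p (by simp)
  have hlow : {c ∈ (A ++ B).toFinset | c < p} = A.toFinset := by
    ext c
    simp only [mem_filter, List.mem_toFinset, List.mem_append]
    exact ⟨fun ⟨hc, hcp⟩ => hc.resolve_right fun hcB => hcp.asymm (hBp c hcB),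
      fun hc => ⟨.inl hc, hAp c hc⟩⟩
  have hhigh : {c ∈ (A ++ B).toFinset | p < c} = B.toFinset := by
    ext c
    simp only [mem_filter, List.mem_toFinset, List.mem_append]
    exact ⟨fun ⟨hc, hpc⟩ => hc.resolve_left fun hcA => hpc.asymm (hAp c hcA),
      fun hc => ⟨.inr hc, hBp c hc⟩⟩
  rw [cyclicSort, hlow, hhigh, (List.toFinset_sort _ hA.sortedGT.nodup).2 (hA.imp le_of_lt),
    (List.toFinset_sort _ hB.sortedGT.nodup).2 (hB.imp le_of_lt)]

end Descents

/-- Plane forests with vertices labelled by `α`, in the first-child/next-sibling encoding: the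
forest `node a f g` consists of a tree with root `a` and forest of subtrees `f`, followed by the
trees of `g`. -/
inductive PlaneForest (α : Type*)
  | nil : PlaneForest α
  | node (a : α) (children siblings : PlaneForest α) : PlaneForest α

namespace PlaneForest

variable {α : Type*}

/-- The word of a plane forest: each label is written when a depth-first traversal enters its
vertex and again when it leaves it. -/
def word : PlaneForest α → List α
  | nil => []
  | node a f g => a :: (word f ++ a :: word g)

/-- The labels of all vertices. -/
def labels : PlaneForest α → Multiset α
  | nil => 0
  | node a f g => a ::ₘ (labels f + labels g)

/-- The root labels, from left to right. -/
def roots : PlaneForest α → List α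
  | nil => []
  | node a _ g => a :: roots g

/-- Juxtaposition of plane forests. -/
protected def append : PlaneForest α → PlaneForest α → PlaneForest α
  | nil, h => h
  | node a f g, h => node a f (g.append h)

instance : Append (PlaneForest α) := ⟨PlaneForest.append⟩

lemma nil_append (h : PlaneForest α) : nil ++ h = h := rfl

lemma node_append (a : α) (f g h : PlaneForest α) : node a f g ++ h = node a f (g ++ h) := rfl

lemma roots_append (f g : PlaneForest α) : (f ++ g).roots = f.roots ++ g.roots := by
  induction f with
  | nil => rfl
  | node a _ f _ ih => rw [node_append, roots, ih, roots, List.cons_append]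

lemma labels_append (f g : PlaneForest α) : (f ++ g).labels = f.labels + g.labels := by
  induction f with
  | nil => rw [nil_append, labels, zero_add]
  | node a _ f _ ih => rw [node_append, labels, ih, labels, Multiset.cons_add, add_assoc]

lemma append_inj {f g f' g' : PlaneForest α} (h : f ++ g = f' ++ g')
    (hroots : f.roots.length = f'.roots.length) : f = f' ∧ g = g' := by
  induction f generalizing f' with
  | nil =>
    cases f' with
    | nil => exact ⟨rfl, h⟩
    | node => simp [roots] at hroots
  | node a u f _ ih =>
    cases f' with
    | nil => simp [roots] at hroots
    | node a' u' f' =>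
      rw [node_append, node_append, node.injEq] at h
      obtain ⟨rfl, rfl, h⟩ := h
      obtain ⟨rfl, rfl⟩ := ih h (by simpa [roots] using hroots)
      exact ⟨rfl, rfl⟩

lemma exists_eq_append_of_roots_eq_append {h : PlaneForest α} {K L : List α}
    (hroots : h.roots = K ++ L) : ∃ f g, h = f ++ g ∧ f.roots = K ∧ g.roots = L := by
  induction K generalizing h with
  | nil => exact ⟨nil, h, rfl, rfl, hroots⟩
  | cons a K ih =>
    cases h with
    | nil => simp [roots] at hroots
    | node b u h =>
      obtain ⟨rfl, htail⟩ := List.cons.inj hroots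
      obtain ⟨f, g, rfl, hf, hg⟩ := ih htail
      exact ⟨node b u f, g, rfl, by rw [roots, hf], hg⟩

lemma roots_le_labels (f : PlaneForest α) : (f.roots : Multiset α) ≤ f.labels := by
  induction f with
  | nil => simp [roots, labels]
  | node a f g _ ih =>
    rw [roots, labels, ← Multiset.cons_coe, Multiset.cons_le_cons_iff]
    exact ih.trans (Multiset.le_add_left _ _)

/-- Removes the first root and puts the forest of its subtrees in its place. -/
def promote : PlaneForest α → PlaneForest α
  | nil => nil
  | node _ f g => f ++ g

section LinearOrder

variable [LinearOrder α]

/-- Around every vertex, the children are arranged in the cyclically decreasing order. -/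
def IsArranged : PlaneForest α → Prop
  | nil => True
  | node a f g => IsCyclicallyDecreasing a f.roots ∧ f.IsArranged ∧ g.IsArranged

lemma isArranged_append {f g : PlaneForest α} :
    (f ++ g).IsArranged ↔ f.IsArranged ∧ g.IsArranged := by
  induction f with
  | nil => rw [nil_append, IsArranged, true_and]
  | node a u f _ ih => rw [node_append, IsArranged, ih, IsArranged, and_assoc, and_assoc]

/-- The sum over all vertices of the number of descents of the cyclic word formed by the vertex
and its children. -/
def cyclicDescents : PlaneForest α → ℕ
  | nil => 0
  | node a f g => descents (a :: (f.roots ++ [a])) + f.cyclicDescents + g.cyclicDescents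

-- Each subtree is a closed walk `a ⋯ a`, so that it can be cut out of the word at the letter `a`.
lemma descents_cons_word_append (f : PlaneForest α) (x : α) (l : List α) :
    descents (x :: (f.word ++ l)) = descents (x :: (f.roots ++ l)) + f.cyclicDescents := by
  induction f generalizing x l with
  | nil => simp [word, roots, cyclicDescents]
  | node a f g ihf ihg =>
    have hcut : descents (a :: (f.word ++ a :: (g.word ++ l))) =
        descents (a :: (f.word ++ [a])) + descents (a :: (g.word ++ l)) :=
      descents_append_cons (a :: f.word) (g.word ++ l) a
    simp only [word, roots, cyclicDescents, List.cons_append, List.append_assoc,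
      descents_cons_cons, hcut, ihf, ihg]
    ring

lemma cyclicDescents_add_length_roots_le (f : PlaneForest α) :
    f.cyclicDescents + f.roots.length ≤ f.labels.card := by
  induction f with
  | nil => simp [cyclicDescents, roots]
  | node a f g ihf ihg =>
    have ha := descents_cons_append_singleton_le (le_refl a) f.roots
    simp only [cyclicDescents, roots, labels, List.length_cons, Multiset.card_cons,
      Multiset.card_add]
    lia

lemma cyclicDescents_add_length_roots_eq_iff {f : PlaneForest α} :
    f.cyclicDescents + f.roots.length = f.labels.card ↔ f.IsArranged := by
  induction f with
  | nil => simp [cyclicDescents, roots, labels, IsArranged]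
  | node a f g ihf ihg =>
    have ha := descents_cons_append_singleton_le (le_refl a) f.roots
    have hf := f.cyclicDescents_add_length_roots_le
    have hg := g.cyclicDescents_add_length_roots_le
    rw [IsArranged, ← ihf, ← ihg, IsCyclicallyDecreasing]
    simp only [cyclicDescents, roots, labels, List.length_cons, Multiset.card_cons,
      Multiset.card_add]
    lia

lemma descents_cons_word_append_singleton_eq_card_iff {p : α} {f : PlaneForest α} :
    descents (p :: (f.word ++ [p])) = f.labels.card ↔ (node p f nil).IsArranged := by
  rw [← cyclicDescents_add_length_roots_eq_iff, descents_cons_word_append]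
  simp [cyclicDescents, roots, labels]

end LinearOrder

end PlaneForest

section QuasiStirling

variable {α : Type*}

/-- A word in which no two distinct letters `x`, `y` occur in the pattern `x ⋯ y ⋯ x ⋯ y`. -/
def IsNoncrossing (l : List α) : Prop :=
  ∀ ⦃x y⦄, [x, y, x, y].Sublist l → x = y

lemma IsNoncrossing.sublist {l l' : List α} (h : IsNoncrossing l) (hl : l'.Sublist l) :
    IsNoncrossing l' :=
  fun _ _ hxy => h (hxy.trans hl)

lemma IsNoncrossing.append {u t : List α} (hu : IsNoncrossing u) (ht : IsNoncrossing t)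
    (hdisj : u.Disjoint t) : IsNoncrossing (u ++ t) := by
  intro x y hxy
  obtain ⟨k, m, hkm, hk, hm⟩ := List.sublist_append_iff.1 hxy
  have hnot : ∀ z ∈ k, z ∉ m := fun z hzk hzm => hdisj (hk.subset hzk) (hm.subset hzm)
  rcases k with _ | ⟨_, _ | ⟨_, _ | ⟨_, _ | ⟨_, _ | _⟩⟩⟩⟩ <;>
    simp only [List.nil_append, List.cons_append, List.cons.injEq, reduceCtorEq, and_false] at hkm
  · exact ht (hkm ▸ hm)
  · grind
  · grind
  · grind
  · grind [IsNoncrossing]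

lemma IsNoncrossing.cons_append_singleton {a : α} {u : List α} (hu : IsNoncrossing u)
    (ha : a ∉ u) : IsNoncrossing (a :: (u ++ [a])) := by
  intro x y hxy
  by_contra hne
  have hrest : ∀ {k : List α} {z : α}, z ≠ a → (k ++ [z]).Sublist (u ++ [a]) →
      (k ++ [z]).Sublist u := by
    intro k z hz hk
    rw [← List.reverse_sublist] at hk ⊢
    simp only [List.reverse_append, List.reverse_singleton, List.singleton_append] at hk ⊢
    exact List.Sublist.of_cons_of_ne hz hk
  by_cases hxa : x = a
  · subst hxa
    exact ha ((hrest (k := [y, x]) (Ne.symm hne) (List.cons_sublist_cons.1 hxy)).subset (by simp))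
  · replace hxy := hxy.of_cons_of_ne hxa
    by_cases hya : y = a
    · subst hya
      exact ha ((hrest (k := [x, y]) hxa ((List.sublist_append_left _ [y]).trans hxy)).subset
        (by simp))
    · exact hne (hu (hrest (k := [x, y, x]) hya hxy))

/-- A word that is noncrossing and uses every one of its letters twice: a quasi-Stirling
permutation of the set of its letters. -/
structure IsQuasiStirling [DecidableEq α] (l : List α) : Prop where
  count_eq_two : ∀ a ∈ l, l.count a = 2
  isNoncrossing : IsNoncrossing l

variable [DecidableEq α]

lemma isQuasiStirling_nil : IsQuasiStirling ([] : List α) :=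
  ⟨by simp, fun _ _ h => by simp at h⟩

lemma count_cons_append_cons (a b : α) (u t : List α) :
    (a :: (u ++ a :: t)).count b = u.count b + t.count b + if b = a then 2 else 0 := by
  grind

lemma isQuasiStirling_cons_append_cons {a : α} {u t : List α} :
    IsQuasiStirling (a :: (u ++ a :: t)) ↔
      a ∉ u ∧ a ∉ t ∧ u.Disjoint t ∧ IsQuasiStirling u ∧ IsQuasiStirling t := by
  constructor
  · rintro ⟨htwo, hnc⟩
    have ha := htwo a (by simp)
    have hau : a ∉ u := List.count_eq_zero.1 (by grind)
    have hat : a ∉ t := List.count_eq_zero.1 (by grind)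
    have hdisj : u.Disjoint t := by
      intro x hxu hxt
      have hpattern : [a, x, a, x].Sublist (a :: (u ++ a :: t)) :=
        List.cons_sublist_cons.2 <| (List.singleton_sublist.2 hxu).append <|
          List.cons_sublist_cons.2 (List.singleton_sublist.2 hxt)
      exact hau (hnc hpattern ▸ hxu)
    refine ⟨hau, hat, hdisj, ⟨fun b hb => ?_, hnc.sublist ?_⟩, ⟨fun b hb => ?_, hnc.sublist ?_⟩⟩
    · have hb_two := htwo b (by simp [hb])
      have hb_zero := List.count_eq_zero.2 (hdisj hb)
      grind
    · grind
    · have hb_two := htwo b (by simp [hb])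
      have hb_zero := List.count_eq_zero.2 (hdisj.symm hb)
      grind
    · grind
  · rintro ⟨hau, hat, hdisj, hu, ht⟩
    have hua : (a :: (u ++ [a])).Disjoint t := by grind [List.Disjoint]
    refine ⟨fun b hb => ?_, ?_⟩
    · rw [count_cons_append_cons]
      by_cases hba : b = a
      · simp [hba, List.count_eq_zero.2 hau, List.count_eq_zero.2 hat]
      have hmem : b ∈ u ∨ b ∈ t := by simpa [hba] using hb
      rcases hmem with hb | hb
      · simp [hba, hu.count_eq_two b hb, List.count_eq_zero.2 (hdisj hb)]
      · simp [hba, ht.count_eq_two b hb, List.count_eq_zero.2 (hdisj.symm hb)]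
    · simpa using (hu.isNoncrossing.cons_append_singleton hau).append ht.isNoncrossing hua

end QuasiStirling

namespace PlaneForest

variable {α : Type*}

lemma mem_word {x : α} {f : PlaneForest α} : x ∈ f.word ↔ x ∈ f.labels := by
  induction f with
  | nil => simp [word, labels]
  | node a f g ihf ihg =>
    simp only [word, labels, List.mem_cons, List.mem_append, Multiset.mem_cons, Multiset.mem_add,
      ihf, ihg]
    tauto

lemma injOn_word : Set.InjOn word {f : PlaneForest α | f.labels.Nodup} := by
  intro f (hf : f.labels.Nodup) f' (hf' : f'.labels.Nodup) h
  induction f generalizing f' with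
  | nil =>
    cases f' with
    | nil => rfl
    | node => simp [word] at h
  | node a f g ihf ihg =>
    cases f' with
    | nil => simp [word] at h
    | node a' f' g' =>
      obtain ⟨rfl, h⟩ := List.cons.inj h
      simp only [labels, Multiset.nodup_cons, Multiset.mem_add, Multiset.nodup_add, not_or,
        ← mem_word] at hf hf'
      obtain ⟨⟨haf, hag⟩, hf, hg, -⟩ := hf
      obtain ⟨-, hf', hg', -⟩ := hf'
      obtain ⟨hfeq, -, hgeq⟩ := (List.append_cons_inj_of_notMem haf hag).1 h
      rw [ihf hf hf' hfeq, ihg hg hg' hgeq]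

variable [DecidableEq α]

lemma toFinset_word (f : PlaneForest α) : f.word.toFinset = f.labels.toFinset := by
  ext x
  rw [List.mem_toFinset, Multiset.mem_toFinset, mem_word]

lemma isQuasiStirling_word_iff {f : PlaneForest α} :
    IsQuasiStirling f.word ↔ f.labels.Nodup := by
  induction f with
  | nil => simp [word, labels, isQuasiStirling_nil]
  | node a f g ihf ihg =>
    have hdisj : f.word.Disjoint g.word ↔ Disjoint f.labels g.labels := by
      simp only [List.Disjoint, mem_word, Multiset.disjoint_left]
    rw [word, labels, isQuasiStirling_cons_append_cons, ihf, ihg, hdisj, mem_word, mem_word,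
      Multiset.nodup_cons, Multiset.mem_add, Multiset.nodup_add]
    tauto

lemma exists_word_eq {l : List α} (hl : IsQuasiStirling l) : ∃ f : PlaneForest α, f.word = l := by
  induction hn : l.length using Nat.strong_induction_on generalizing l with
  | _ n ih =>
    cases l with
    | nil => exact ⟨nil, rfl⟩
    | cons a l =>
      have ha : a ∈ l := by
        have := hl.count_eq_two a (by simp)
        rw [List.count_cons_self] at this
        exact List.count_pos_iff.1 (by lia)
      obtain ⟨u, t, rfl⟩ := List.append_of_mem ha
      obtain ⟨-, -, -, hu, ht⟩ := isQuasiStirling_cons_append_cons.1 hl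
      simp only [List.length_cons, List.length_append] at hn
      obtain ⟨f, rfl⟩ := ih u.length (by lia) hu rfl
      obtain ⟨g, rfl⟩ := ih t.length (by lia) ht rfl
      exact ⟨node a f g, rfl⟩

lemma bijOn_word : Set.BijOn word {f : PlaneForest α | f.labels.Nodup} {l | IsQuasiStirling l} := by
  refine ⟨fun f hf => isQuasiStirling_word_iff.2 hf, injOn_word, fun l hl => ?_⟩
  obtain ⟨f, rfl⟩ := exists_word_eq hl
  exact ⟨f, isQuasiStirling_word_iff.1 hl, rfl⟩

end PlaneForest

section CayleyNumber

lemma sum_choose_mul_mul_pow {R : Type*} [CommSemiring R] (x : R) (r : ℕ) :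
    ∑ j ∈ range (r + 1), (r.choose j : R) * j * x ^ (r - j) = r * (x + 1) ^ (r - 1) := by
  cases r with
  | zero => simp
  | succ s =>
    rw [sum_range_succ', Nat.cast_zero, mul_zero, zero_mul, add_zero, add_tsub_cancel_right,
      add_comm x 1, add_pow, mul_sum]
    refine sum_congr rfl fun j _ => ?_
    rw [← Nat.cast_mul, ← Nat.add_one_mul_choose_eq, one_pow, Nat.add_sub_add_right]
    push_cast
    ring

/-- The number `k (k + r) ^ (r - 1)` of forests on `k + r` labelled vertices with `k` prescribed
roots, read as `1` if `r = 0`. -/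
def cayleyNumber : ℕ → ℕ → ℕ
  | _, 0 => 1
  | k, r + 1 => k * (k + r + 1) ^ r

lemma add_mul_cayleyNumber (k r : ℕ) : (k + r) * cayleyNumber k r = k * (k + r) ^ r := by
  cases r with
  | zero => simp [cayleyNumber]
  | succ r => rw [cayleyNumber]; ring

lemma cayleyNumber_zero_left {r : ℕ} (hr : r ≠ 0) : cayleyNumber 0 r = 0 := by
  obtain ⟨r, rfl⟩ := Nat.exists_eq_succ_of_ne_zero hr
  rw [cayleyNumber, zero_mul]

lemma cayleyNumber_one_left (r : ℕ) : cayleyNumber 1 r = (r + 1) ^ (r - 1) := by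
  cases r with
  | zero => rfl
  | succ r => rw [cayleyNumber, one_mul, add_comm 1 r, add_tsub_cancel_right]

lemma cayleyNumber_add_one_left (k r : ℕ) :
    cayleyNumber (k + 1) r = ∑ j ∈ range (r + 1), r.choose j * cayleyNumber (k + j) (r - j) := by
  cases r with
  | zero => simp [cayleyNumber]
  | succ s =>
    obtain ⟨m, hm⟩ : ∃ m, m = k + (s + 1) := ⟨_, rfl⟩
    have hmul : ∀ j ∈ range (s + 2), m * ((s + 1).choose j * cayleyNumber (k + j) (s + 1 - j)) =
        k * ((s + 1).choose j * m ^ (s + 1 - j)) + (s + 1).choose j * j * m ^ (s + 1 - j) := by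
      intro j hj
      have hjm : k + j + (s + 1 - j) = m := by grind
      have hcayley := add_mul_cayleyNumber (k + j) (s + 1 - j)
      rw [hjm] at hcayley
      rw [mul_left_comm, hcayley]
      ring
    have hbinom : ∑ j ∈ range (s + 2), (s + 1).choose j * m ^ (s + 1 - j) = (m + 1) ^ (s + 1) := by
      rw [add_comm m 1, add_pow]
      exact sum_congr rfl fun j _ => by rw [one_pow, one_mul, mul_comm, Nat.cast_id]
    have hweighted := sum_choose_mul_mul_pow m (s + 1)
    simp only [Nat.cast_id, add_tsub_cancel_right] at hweighted
    refine Nat.eq_of_mul_eq_mul_left (show 0 < m by lia) ?_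
    rw [mul_sum, sum_congr rfl hmul, sum_add_distrib, ← mul_sum, hbinom, hweighted, cayleyNumber,
      hm]
    ring

end CayleyNumber

namespace PlaneForest

variable {α : Type*} [LinearOrder α]

/-- The arranged plane forests with root list `L` whose remaining labels form the set `R`. Since
sibling order is determined by being arranged, these are the unordered forests with roots `L`. -/
def arrangedForests (L : List α) (R : Finset α) : Set (PlaneForest α) :=
  {f | f.roots = L ∧ f.IsArranged ∧ f.labels = L + R.val}

lemma arrangedForests_nil_empty : arrangedForests [] (∅ : Finset α) = {nil} := by
  ext f
  cases f <;> simp [arrangedForests, roots, IsArranged, labels]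

lemma arrangedForests_nil_of_nonempty {R : Finset α} (hR : R.Nonempty) :
    arrangedForests [] R = ∅ := by
  refine Set.eq_empty_of_forall_notMem ?_
  rintro (_ | ⟨a, f, g⟩) ⟨hroots, -, hlabels⟩
  · exact hR.ne_empty (val_eq_zero.1 (by simpa [labels] using hlabels.symm))
  · simp [roots] at hroots

lemma val_eq_cyclicSort_add_sdiff {p : α} {C R : Finset α} (hp : p ∉ R) (hC : C ⊆ R) :
    R.val = cyclicSort p C + (R \ C).val := by
  rw [coe_cyclicSort (fun h => hp (hC h)), sdiff_val, add_tsub_cancel_of_le (val_le_iff.2 hC)]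

lemma mapsTo_promote {p : α} {L : List α} {R : Finset α} (hp : p ∉ R) :
    Set.MapsTo promote (arrangedForests (p :: L) R)
      (⋃ C ∈ R.powerset, arrangedForests (cyclicSort p C ++ L) (R \ C)) := by
  rintro (_ | ⟨a, f, g⟩) ⟨hroots, harr, hlabels⟩
  · simp [roots] at hroots
  obtain ⟨rfl, rfl⟩ := List.cons.inj hroots
  obtain ⟨hcyc, hf, hg⟩ := harr
  rw [labels, ← Multiset.cons_coe, Multiset.cons_add, Multiset.cons_inj_right] at hlabels
  have hle : (f.roots : Multiset α) ≤ R.val := by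
    rw [← Multiset.add_le_add_iff_left, ← hlabels, add_comm]
    exact add_le_add f.roots_le_labels g.roots_le_labels
  have hnodup : f.roots.Nodup := Multiset.coe_nodup.1 (Multiset.nodup_of_le hle R.nodup)
  have hC : f.roots.toFinset ⊆ R := by
    rwa [← val_le_iff, List.toFinset_val, hnodup.dedup]
  refine Set.mem_biUnion (mem_powerset.2 hC) ⟨?_, isArranged_append.2 ⟨hf, hg⟩, ?_⟩
  · rw [← hcyc.eq_cyclicSort, promote, roots_append]
  · rw [promote, labels_append, hlabels, val_eq_cyclicSort_add_sdiff hp hC, ← Multiset.coe_add]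
    abel

lemma injOn_promote (p : α) (L : List α) (R : Finset α) :
    Set.InjOn promote (arrangedForests (p :: L) R) := by
  rintro (_ | ⟨a, f, g⟩) ⟨hroots, -, -⟩ (_ | ⟨a', f', g'⟩) ⟨hroots', -, -⟩ h
  · rfl
  · simp [roots] at hroots
  · simp [roots] at hroots'
  obtain ⟨rfl, hg⟩ := List.cons.inj hroots
  obtain ⟨rfl, hg'⟩ := List.cons.inj hroots'
  have hlen := congrArg (List.length ∘ roots) h
  simp only [promote, Function.comp_apply, roots_append, List.length_append, hg, hg',
    add_left_inj] at hlen
  obtain ⟨rfl, rfl⟩ := append_inj h hlen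
  rfl

lemma surjOn_promote {p : α} {L : List α} {R : Finset α} (hp : p ∉ R) :
    Set.SurjOn promote (arrangedForests (p :: L) R)
      (⋃ C ∈ R.powerset, arrangedForests (cyclicSort p C ++ L) (R \ C)) := by
  intro h hh
  obtain ⟨C, hC, hroots, harr, hlabels⟩ := Set.mem_iUnion₂.1 hh
  obtain ⟨f, g, rfl, hf, hg⟩ := exists_eq_append_of_roots_eq_append hroots
  obtain ⟨harrf, harrg⟩ := isArranged_append.1 harr
  refine ⟨node p f g, ⟨by rw [roots, hg], ⟨?_, harrf, harrg⟩, ?_⟩, rfl⟩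
  · exact hf ▸ isCyclicallyDecreasing_cyclicSort p C
  · rw [labels, ← labels_append, hlabels, val_eq_cyclicSort_add_sdiff hp (mem_powerset.1 hC),
      ← Multiset.coe_add, ← Multiset.cons_coe, Multiset.cons_add]
    congr 1
    abel

lemma pairwiseDisjoint_arrangedForests_cyclicSort {p : α} {L : List α} {R : Finset α}
    (hp : p ∉ R) : (R.powerset : Set (Finset α)).PairwiseDisjoint
      fun C => arrangedForests (cyclicSort p C ++ L) (R \ C) := by
  intro C hC C' hC' hne
  refine Set.disjoint_left.2 fun f hf hf' => hne ?_
  have hsort : cyclicSort p C = cyclicSort p C' :=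
    List.append_cancel_right (hf.1.symm.trans hf'.1)
  have hpC : p ∉ C := fun h => hp (mem_powerset.1 hC h)
  have hpC' : p ∉ C' := fun h => hp (mem_powerset.1 hC' h)
  rw [← val_inj, ← coe_cyclicSort hpC, ← coe_cyclicSort hpC', hsort]

lemma encard_arrangedForests_cons {p : α} {L : List α} {R : Finset α} (hp : p ∉ R) :
    (arrangedForests (p :: L) R).encard =
      ∑ C ∈ R.powerset, (arrangedForests (cyclicSort p C ++ L) (R \ C)).encard := by
  rw [← (injOn_promote p L R).encard_image,
    ((mapsTo_promote hp).image_subset.antisymm (surjOn_promote hp)),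
    ← finsum_mem_coe_finset]
  exact R.powerset.finite_toSet.encard_biUnion (pairwiseDisjoint_arrangedForests_cyclicSort hp)

lemma encard_arrangedForests {L : List α} {R : Finset α} (hLR : ∀ p ∈ L, p ∉ R) :
    (arrangedForests L R).encard = cayleyNumber L.length #R := by
  induction hs : L.length + #R using Nat.strong_induction_on generalizing L R with
  | _ s ih =>
    obtain _ | ⟨p, L⟩ := L
    · obtain rfl | hR := R.eq_empty_or_nonempty
      · simp [arrangedForests_nil_empty, cayleyNumber]
      · simp [arrangedForests_nil_of_nonempty hR, cayleyNumber_zero_left hR.card_ne_zero]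
    have hp : p ∉ R := hLR p (by simp)
    have hcard : ∀ C ∈ R.powerset, (arrangedForests (cyclicSort p C ++ L) (R \ C)).encard =
        cayleyNumber (L.length + #C) (#R - #C) := by
      intro C hC
      rw [mem_powerset] at hC
      have hpC : p ∉ C := fun h => hp (hC h)
      have hlen : (cyclicSort p C ++ L).length = L.length + #C := by
        rw [List.length_append, length_cyclicSort hpC, add_comm]
      have hle := card_le_card hC
      have hdisj : ∀ q ∈ cyclicSort p C ++ L, q ∉ R \ C := by
        intro q hq
        rw [List.mem_append, ← Multiset.mem_coe, coe_cyclicSort hpC, mem_val] at hq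
        grind
      rw [ih _ _ hdisj rfl, hlen, card_sdiff_of_subset hC]
      rw [hlen, card_sdiff_of_subset hC, ← hs, List.length_cons]
      lia
    rw [encard_arrangedForests_cons hp, sum_congr rfl hcard, ← Nat.cast_sum,
      sum_powerset_apply_card fun j => cayleyNumber (L.length + j) (#R - j), List.length_cons,
      cayleyNumber_add_one_left]
    simp only [smul_eq_mul]

end PlaneForest

namespace PlaneForest

variable {α : Type*} [LinearOrder α]

lemma image_node_nil (p : α) (S : Finset α) :
    (node p · nil) '' {f | f.labels = S.val ∧ (node p f nil).IsArranged} =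
      arrangedForests [p] S := by
  ext h
  constructor
  · rintro ⟨f, ⟨hlabels, harr⟩, rfl⟩
    exact ⟨rfl, harr, by simp [labels, hlabels]⟩
  · rintro ⟨hroots, harr, hlabels⟩
    rcases h with _ | ⟨a, f, _ | _⟩
    · simp [roots] at hroots
    · obtain rfl : a = p := by simpa [roots] using hroots
      exact ⟨f, ⟨by simpa [labels] using hlabels, harr⟩, rfl⟩
    · simp [roots] at hroots

lemma image_word (p : α) (S : Finset α) :
    word '' {f | f.labels = S.val ∧ (node p f nil).IsArranged} =
      {l | IsQuasiStirling l ∧ l.toFinset = S ∧ descents (p :: (l ++ [p])) = #S} := by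
  ext l
  constructor
  · rintro ⟨f, ⟨hlabels, harr⟩, rfl⟩
    refine ⟨isQuasiStirling_word_iff.2 (hlabels ▸ S.nodup), ?_, ?_⟩
    · rw [toFinset_word, hlabels, val_toFinset]
    · rw [descents_cons_word_append_singleton_eq_card_iff.2 harr, hlabels, card_val]
  · rintro ⟨hl, hS, hdes⟩
    obtain ⟨f, hf, rfl⟩ := bijOn_word.surjOn hl
    have hlabels : f.labels = S.val := by
      rw [← hS, toFinset_word, Multiset.toFinset_val, Multiset.Nodup.dedup hf]
    refine ⟨f, ⟨hlabels, ?_⟩, rfl⟩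
    rw [← descents_cons_word_append_singleton_eq_card_iff, hdes, hlabels, card_val]

lemma encard_setOf_isQuasiStirling {p : α} {S : Finset α} (hp : p ∉ S) :
    {l | IsQuasiStirling l ∧ l.toFinset = S ∧ descents (p :: (l ++ [p])) = #S}.encard =
      ((#S + 1) ^ (#S - 1) : ℕ) := by
  have hword : Set.InjOn word {f | f.labels = S.val ∧ (node p f nil).IsArranged} :=
    by
    refine injOn_word.mono fun f hf => ?_
    rw [Set.mem_ofPred_eq, hf.1]
    exact S.nodup
  have hnode : Function.Injective (node p · nil) := fun f g h => by simpa using h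
  rw [← image_word, hword.encard_image, ← hnode.encard_image, image_node_nil,
    encard_arrangedForests (by simpa using hp), List.length_singleton, cayleyNumber_one_left]

end PlaneForest

section Tuples

variable {α : Type*} [LinearOrder α]

lemma desW_succ_succ {N : ℕ} (w : Fin (N + 2) → α) :
    desW w = (if w 1 < w 0 then 1 else 0) + desW fun i : Fin (N + 1) => w i.succ := by
  rw [desW, Fin.card_filter_univ_succ, desW]
  by_cases h : w 1 < w 0 <;> simp [h, add_comm 1]

lemma desW_strictMono_comp {β : Type*} [LinearOrder β] {g : α → β}
    (hg : StrictMono g) {N : ℕ} (w : Fin N → α) : desW (g ∘ w) = desW w := by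
  simp only [desW, Function.comp_apply, hg.lt_iff_lt]

lemma descents_ofFn_append_singleton {N : ℕ} {w : Fin N → α} {p : α}
    (hp : ∀ i, p < w i) : descents (List.ofFn w ++ [p]) = desW w := by
  induction N with
  | zero => simp [desW]
  | succ N ih =>
    cases N with
    | zero =>
      rw [desW, filter_true_of_mem fun i _ => .inl (by lia)]
      simp [descents_cons_cons, hp]
    | succ N =>
      rw [desW_succ_succ, ← ih fun i => hp i.succ]
      simp only [List.ofFn_succ, List.cons_append, descents_cons_cons, Fin.succ_zero_eq_one]

lemma descents_cons_ofFn_append_singleton {N : ℕ} {w : Fin N → α} {p : α}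
    (hp : ∀ i, p < w i) : descents (p :: (List.ofFn w ++ [p])) = desW w := by
  rw [← descents_ofFn_append_singleton hp]
  cases N with
  | zero => simp [descents_cons_cons]
  | succ N =>
    rw [List.ofFn_succ, List.cons_append, descents_cons_cons, if_neg (hp 0).not_gt, zero_add]

lemma count_ofFn {α : Type*} [DecidableEq α] {N : ℕ} (w : Fin N → α) (a : α) :
    (List.ofFn w).count a = #{i | w i = a} := by
  simpa using (Fin.card_filter_univ_eq_vector_get_eq_count a (List.Vector.ofFn w)).symm

lemma sublist_finRange_iff {N : ℕ} {l : List (Fin N)} :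
    l.Sublist (List.finRange N) ↔ l.SortedLT := by
  refine ⟨fun h => ((List.pairwise_lt_finRange N).sublist h).sortedLT, fun h => ?_⟩
  exact List.sublist_of_subperm_of_sortedLE
    (List.subperm_of_subset h.nodup fun i _ => List.mem_finRange i) h.sortedLE
    (List.pairwise_le_finRange N).sortedLE

lemma isNoncrossing_ofFn_iff {α : Type*} {N : ℕ} {w : Fin N → α} :
    IsNoncrossing (List.ofFn w) ↔ ∀ i j k l : Fin N, i < j → j < k → k < l →
      w i = w k → w j = w l → w i = w j := by
  rw [List.ofFn_eq_map]
  constructor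
  · intro h i j k l hij hjk hkl hik hjl
    have hsub : [i, j, k, l].Sublist (List.finRange N) := by
      rw [sublist_finRange_iff, List.sortedLT_iff_isChain]
      simp [hij, hjk, hkl]
    exact h (by simpa [← hik, ← hjl] using hsub.map w)
  · intro h x y hxy
    obtain ⟨m, hm, he⟩ := List.sublist_map_iff.1 hxy
    simp only [eq_comm (a := [x, y, x, y]), List.map_eq_cons_iff, List.map_eq_nil_iff] at he
    obtain ⟨i, _, rfl, rfl, j, _, rfl, rfl, k, _, rfl, hk, l, _, rfl, hl, rfl⟩ := he
    have hlt := (sublist_finRange_iff.1 hm).isChain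
    simp only [List.isChain_cons_cons] at hlt
    exact h i j k l hlt.1 hlt.2.1 hlt.2.2.1 hk.symm hl.symm

lemma isQuasiStirling_ofFn_iff {α : Type*} [DecidableEq α] {N : ℕ} {w : Fin N → α} :
    IsQuasiStirling (List.ofFn w) ↔ (∀ i, #{j | w j = w i} = 2) ∧
      ∀ i j k l : Fin N, i < j → j < k → k < l → w i = w k → w j = w l → w i = w j := by
  have htwo : (∀ a ∈ List.ofFn w, (List.ofFn w).count a = 2) ↔ ∀ i, #{j | w j = w i} = 2 := by
    simp only [List.forall_mem_ofFn_iff, count_ofFn]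
  rw [← htwo, ← isNoncrossing_ofFn_iff]
  exact ⟨fun h => ⟨h.count_eq_two, h.isNoncrossing⟩, fun h => ⟨h.1, h.2⟩⟩

lemma mem_quasiStirlingSet_iff {n : ℕ} {w : Fin (2 * n) → Fin n} :
    w ∈ quasiStirlingSet n ↔
      IsQuasiStirling (List.ofFn (Fin.succ ∘ w)) ∧ (List.ofFn (Fin.succ ∘ w)).toFinset = {0}ᶜ := by
  have hletters : (List.ofFn (Fin.succ ∘ w)).toFinset = {0}ᶜ ↔ Function.Surjective w := by
    simp [Finset.ext_iff, Fin.forall_fin_succ, Function.Surjective]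
  rw [hletters, isQuasiStirling_ofFn_iff, quasiStirlingSet, mem_filter_univ]
  simp only [Function.comp_apply, Fin.succ_inj]
  constructor
  · rintro ⟨htwo, hnc⟩
    refine ⟨⟨fun i => htwo (w i), hnc⟩, fun a => ?_⟩
    obtain ⟨i, hi⟩ := card_pos.1 (two_pos.trans_eq (htwo a).symm)
    exact ⟨i, (mem_filter_univ i).1 hi⟩
  · rintro ⟨⟨htwo, hnc⟩, hsurj⟩
    exact ⟨hsurj.forall.2 htwo, hnc⟩

lemma exists_ofFn_succ_comp_eq {n : ℕ} {l : List (Fin (n + 1))} (hl : IsQuasiStirling l)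
    (hletters : l.toFinset = {0}ᶜ) : ∃ w : Fin (2 * n) → Fin n, List.ofFn (Fin.succ ∘ w) = l := by
  have hlen : l.length = 2 * n := by
    rw [← List.sum_toFinset_count_eq_length,
      sum_congr rfl fun a ha => hl.count_eq_two a (List.mem_toFinset.1 ha), hletters]
    simp [card_compl, mul_comm]
  have hne (i : Fin l.length) : l.get i ≠ 0 := by
    have hmem : l.get i ∈ l.toFinset := List.mem_toFinset.2 (List.get_mem l i)
    simpa [hletters] using hmem
  refine ⟨fun i => (l.get (i.cast hlen.symm)).pred (hne _),
    List.ext_getElem (by simp [hlen]) fun i _ _ => ?_⟩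
  simp

lemma image_ofFn_succ_comp (n : ℕ) :
    (fun w : Fin (2 * n) → Fin n => List.ofFn (Fin.succ ∘ w)) ''
        {w ∈ quasiStirlingSet n | desW w = n} =
      {l | IsQuasiStirling l ∧ l.toFinset = {0}ᶜ ∧ descents (0 :: (l ++ [0])) = n} := by
  have hdes (w : Fin (2 * n) → Fin n) :
      descents (0 :: (List.ofFn (Fin.succ ∘ w) ++ [0])) = desW w := by
    rw [descents_cons_ofFn_append_singleton (w := Fin.succ ∘ w) fun i => Fin.succ_pos (w i),
      desW_strictMono_comp Fin.strictMono_succ]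
  ext l
  constructor
  · rintro ⟨w, ⟨hw, hn⟩, rfl⟩
    obtain ⟨hqs, hletters⟩ := mem_quasiStirlingSet_iff.1 hw
    exact ⟨hqs, hletters, (hdes w).trans hn⟩
  · rintro ⟨hqs, hletters, hn⟩
    obtain ⟨w, rfl⟩ := exists_ofFn_succ_comp_eq hqs hletters
    exact ⟨w, ⟨mem_quasiStirlingSet_iff.2 ⟨hqs, hletters⟩, (hdes w).symm.trans hn⟩, rfl⟩

end Tuples

/-- The number of quasi-Stirling permutations of size `n` with exactly `n`
descents is `(n+1)^(n-1)`. -/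
theorem card_quasiStirling_with_n_descents (n : ℕ) (hn : 1 ≤ n) :
    ((quasiStirlingSet n).filter fun w => desW w = n).card = (n + 1) ^ (n - 1) := by
  have hinj : Function.Injective fun w : Fin (2 * n) → Fin n => List.ofFn (Fin.succ ∘ w) :=
    List.ofFn_injective.comp (Fin.succ_injective n).comp_left
  have hcard : #({0}ᶜ : Finset (Fin (n + 1))) = n := by simp [card_compl]
  have hcount := PlaneForest.encard_setOf_isQuasiStirling (p := (0 : Fin (n + 1))) (S := {0}ᶜ)
    (by simp)
  rw [hcard, ← image_ofFn_succ_comp, hinj.encard_image, ← coe_filter,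
    Set.encard_coe_eq_coe_finsetCard] at hcount
  exact_mod_cast hcount
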